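/- arXiv:1807.05549 — 7 statements merged into one kernel-verified Lean document; each statement's English description precedes it below -/
import Mathlib

section
/- For every integer n ≥ 1, the 2^n real numbers d_S, where S ranges over all subsets of {1,…,n}, are linearly independent over ℚ, and their ℚ-linear span coincides with the ℚ-linear span of the powers 1, θ, θ², …, θ^{2^n−1}, where θ = 2·cos(π/2^{n+1}). (Equivalently, the d_S form a ℚ-basis of the field ℚ(2·cos(π/2^{n+1})).) -/
open Real

/-- `c j = 2·cos(π/2^(j+1))` (so `c 0 = 0`). -/
noncomputable def c (j : ℕ) : ℝ := 2 * Real.cos (π / 2 ^ (j + 1))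

/-- `d S = ∏_{j ∈ S} c j` (so `d ∅ = 1`). -/
noncomputable def d (S : Finset ℕ) : ℝ := ∏ j ∈ S, c j

/-!
The number `c n` is a root of the rescaled Chebyshev polynomial `C_{2 ^ n}`, which is Eisenstein at
`2`: modulo `2` it is `X ^ 2 ^ n`, and its constant term is `±2` for `n ≥ 1`. Hence the powers
`c n ^ i` with `i < 2 ^ n` are linearly independent over `ℚ`. On the other hand, the span of the
`2 ^ n` products `d S` is the product of the subspaces `ℚ + ℚ c j`, and by `c 0 = 0` and the
half-angle relations `c (k + 1) ^ 2 = 2 + c k` it is stable under multiplication by `c n`, so that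
it contains all these powers. Counting dimensions, the `d S` are linearly independent as well, and
the two spans agree.
-/

section Exchange

variable {K V ι κ : Type*} [DivisionRing K] [AddCommGroup V] [Module K V] [Fintype ι] [Fintype κ]

lemma linearIndependent_and_span_eq_of_mem_span_of_card_le {v : ι → V} {w : κ → V}
    (hv : LinearIndependent K v) (hvw : ∀ i, v i ∈ Submodule.span K (Set.range w))
    (hcard : Fintype.card κ ≤ Fintype.card ι) :
    LinearIndependent K w ∧ Submodule.span K (Set.range w) = Submodule.span K (Set.range v) := by
  have hle : Submodule.span K (Set.range v) ≤ Submodule.span K (Set.range w) :=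
    Submodule.span_le.mpr (Set.range_subset_iff.mpr hvw)
  have hrank : Module.finrank K (Submodule.span K (Set.range v)) = Fintype.card ι :=
    finrank_span_eq_card hv
  have : FiniteDimensional K (Submodule.span K (Set.range w)) :=
    FiniteDimensional.span_of_finite K (Set.finite_range w)
  constructor
  · exact linearIndependent_iff_card_le_finrank_span.mpr
      ((hcard.trans hrank.ge).trans (Submodule.finrank_mono hle))
  · exact (Submodule.eq_of_le_of_finrank_le hle
      ((finrank_range_le_card w).trans (hcard.trans hrank.ge))).symm

end Exchange

section SubsetProducts

variable {R A : Type*} [CommSemiring R] [CommSemiring A] [Algebra R A]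

lemma span_range_prod_subset_eq_prod {ι : Type*} (s : Finset ι) (x : ι → A) :
    Submodule.span R (Set.range fun t : {t : Finset ι // t ⊆ s} => ∏ i ∈ t.1, x i) =
      ∏ i ∈ s, (1 + Submodule.span R {x i}) := by
  calc
    _ = ⨆ t ∈ s.powerset, Submodule.span R {∏ i ∈ t, x i} := by
      simp only [Submodule.span_range_eq_iSup, iSup_subtype, Finset.mem_powerset]
    _ = s.powerset.sup fun t => Submodule.span R {∏ i ∈ t, x i} :=
      (Finset.sup_eq_iSup _ _).symm
    -- Addition of submodules is defined as `⊔`.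
    _ = ∑ t ∈ s.powerset, Submodule.span R {∏ i ∈ t, x i} := rfl
    _ = ∏ i ∈ s, (1 + Submodule.span R {x i}) := by
      simp only [Finset.prod_one_add, Submodule.prod_span_singleton]

variable {x : ℕ → A}

lemma span_singleton_mul_prod_le (h0 : x 0 ∈ (1 : Submodule R A))
    (hsucc : ∀ k, x (k + 1) ^ 2 ∈ 1 + Submodule.span R {x k}) (n : ℕ) :
    Submodule.span R {x n} * ∏ j ∈ Finset.Icc 1 n, (1 + Submodule.span R {x j}) ≤
      ∏ j ∈ Finset.Icc 1 n, (1 + Submodule.span R {x j}) := by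
  induction n with
  | zero => simpa using h0
  | succ n ih =>
    rw [Finset.prod_Icc_succ_top (Nat.le_add_left 1 n)]
    set P := ∏ j ∈ Finset.Icc 1 n, (1 + Submodule.span R {x j})
    set L := Submodule.span R {x (n + 1)}
    have hL : L ^ 2 ≤ 1 + Submodule.span R {x n} := by
      rw [Submodule.span_pow, Set.singleton_pow]
      exact (Submodule.span_singleton_le_iff_mem _ _).mpr (hsucc n)
    have hP : P * L ^ 2 ≤ P :=
      calc P * L ^ 2 ≤ P * (1 + Submodule.span R {x n}) := mul_le_mul_right hL P
        _ = P + Submodule.span R {x n} * P := by ring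
        _ ≤ P := sup_le le_rfl ih
    calc L * (P * (1 + L)) = P * L + P * L ^ 2 := by ring
      _ ≤ P * L + P := sup_le_sup le_rfl hP
      _ = P * (1 + L) := by ring

lemma pow_mem_span_range_prod_subset (h0 : x 0 ∈ (1 : Submodule R A))
    (hsucc : ∀ k, x (k + 1) ^ 2 ∈ 1 + Submodule.span R {x k}) (n i : ℕ) :
    x n ^ i ∈ Submodule.span R
      (Set.range fun t : {t : Finset ℕ // t ⊆ Finset.Icc 1 n} => ∏ j ∈ t.1, x j) := by
  induction i with
  | zero => exact Submodule.subset_span ⟨⟨∅, Finset.empty_subset _⟩, by simp⟩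
  | succ i ih =>
    rw [span_range_prod_subset_eq_prod] at ih ⊢
    rw [pow_succ']
    exact span_singleton_mul_prod_le h0 hsucc n
      (Submodule.mul_mem_mul (Submodule.mem_span_singleton_self _) ih)

end SubsetProducts

section ChebyshevC

open Polynomial

variable (R : Type*) [CommRing R]

lemma isMonicOfDegree_chebyshevC_succ [Nontrivial R] (n : ℕ) :
    IsMonicOfDegree (Chebyshev.C R (n + 1)) (n + 1) := by
  induction n using Nat.twoStepInduction with
  | zero => simpa using isMonicOfDegree_X R
  | one =>
    rw [Nat.cast_one, one_add_one_eq_two, one_add_one_eq_two, Chebyshev.C_two]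
    exact (isMonicOfDegree_X_pow R 2).sub (by simp)
  | more n ih₁ ih₂ =>
    rw [show ((n + 2 : ℕ) : ℤ) + 1 = n + 1 + 2 by push_cast; ring, Chebyshev.C_add_two,
      show n + 2 + 1 = 1 + (n + 1 + 1) by ring]
    push_cast at ih₂
    exact ((isMonicOfDegree_X R).mul ih₂).sub (by rw [ih₁.natDegree_eq]; omega)

lemma isMonicOfDegree_chebyshevC [Nontrivial R] {n : ℕ} (hn : n ≠ 0) :
    IsMonicOfDegree (Chebyshev.C R n) n := by
  obtain ⟨n, rfl⟩ := Nat.exists_eq_succ_of_ne_zero hn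
  exact_mod_cast isMonicOfDegree_chebyshevC_succ R n

lemma chebyshevC_prime_pow_eq_X_pow (p : ℕ) [Fact p.Prime] [CharP R p] (n : ℕ) :
    Chebyshev.C R (p ^ n) = X ^ p ^ n := by
  induction n with
  | zero => simp
  | succ n ih =>
    rw [pow_succ, Chebyshev.C_mul, ih, ← dickson_one_one_eq_chebyshev_C,
      dickson_one_one_charP, X_pow_comp, ← pow_mul, ← pow_succ']

lemma prime_dvd_coeff_chebyshevC_prime_pow (p : ℕ) [Fact p.Prime] {n i : ℕ} (hi : i ≠ p ^ n) :
    (p : R) ∣ (Chebyshev.C R (p ^ n)).coeff i := by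
  have hℤ : (p : ℤ) ∣ (Chebyshev.C ℤ (p ^ n)).coeff i := by
    rw [← ZMod.intCast_zmod_eq_zero_iff_dvd, ← eq_intCast (Int.castRingHom (ZMod p)), ← coeff_map,
      Chebyshev.map_C, chebyshevC_prime_pow_eq_X_pow, coeff_X_pow, if_neg hi]
  rw [← Chebyshev.map_C (Int.castRingHom R), coeff_map]
  simpa using map_dvd (Int.castRingHom R) hℤ

lemma coeff_zero_chebyshevC_two_mul (m : ℤ) :
    (Chebyshev.C R (2 * m)).coeff 0 = 2 * m.negOnePow := by
  rw [mul_comm, coeff_zero_eq_eval_zero, Chebyshev.C_mul, eval_comp, Chebyshev.C_two]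
  simp

variable {R}

lemma irreducible_chebyshevC_two_pow [IsDomain R] (h2 : Prime (2 : R)) (n : ℕ) :
    Irreducible (Chebyshev.C R (2 ^ n)) := by
  cases n with
  | zero => simpa using irreducible_X
  | succ n =>
    obtain ⟨hdeg, hmonic⟩ : IsMonicOfDegree (Chebyshev.C R (2 ^ (n + 1))) (2 ^ (n + 1)) :=
      mod_cast isMonicOfDegree_chebyshevC R (n := 2 ^ (n + 1)) (by positivity)
    have hprime : (Ideal.span {(2 : R)}).IsPrime := (Ideal.span_singleton_prime h2.ne_zero).mpr h2
    have hcoeff {i : ℕ} (hi : i < (Chebyshev.C R (2 ^ (n + 1))).natDegree) :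
        (Chebyshev.C R (2 ^ (n + 1))).coeff i ∈ Ideal.span {(2 : R)} :=
      Ideal.mem_span_singleton.mpr
        (mod_cast prime_dvd_coeff_chebyshevC_prime_pow R 2 (hi.trans_eq hdeg).ne)
    have hcoeff_zero : (Chebyshev.C R (2 ^ (n + 1))).coeff 0 ∉ Ideal.span {(2 : R)} ^ 2 := by
      rw [Ideal.span_singleton_pow, Ideal.mem_span_singleton, sq, pow_succ',
        coeff_zero_chebyshevC_two_mul, mul_dvd_mul_iff_left h2.ne_zero]
      exact fun hdvd => h2.not_isUnit (isUnit_of_dvd_unit hdvd (by simp))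
    exact (hmonic.isEisensteinAt_of_mem_of_notMem hprime.ne_top hcoeff hcoeff_zero).irreducible
      hprime hmonic.isPrimitive (by rw [hdeg]; positivity)

end ChebyshevC

lemma c_zero : c 0 = 0 := by simp [c]

lemma c_succ_sq (k : ℕ) : c (k + 1) ^ 2 = 2 + c k := by
  have hangle : π / 2 ^ (k + 1) = 2 * (π / 2 ^ (k + 1 + 1)) := by
    field_simp
    ring
  rw [c, c, hangle, Real.cos_two_mul]
  ring

lemma eval_chebyshevC_two_pow_c (n : ℕ) : (Polynomial.Chebyshev.C ℝ (2 ^ n)).eval (c n) = 0 := by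
  have hangle : ((2 ^ n : ℤ) : ℝ) * (π / 2 ^ (n + 1)) = π / 2 := by
    push_cast
    field_simp
    ring
  rw [c, Polynomial.Chebyshev.C_two_mul_real_cos, hangle, Real.cos_pi_div_two, mul_zero]

lemma minpoly_c (n : ℕ) : minpoly ℚ (c n) = Polynomial.Chebyshev.C ℚ (2 ^ n) := by
  have hmonic : (Polynomial.Chebyshev.C ℤ (2 ^ n)).Monic :=
    mod_cast (isMonicOfDegree_chebyshevC ℤ (n := 2 ^ n) (by positivity)).monic
  rw [← Polynomial.Chebyshev.map_C (algebraMap ℤ ℚ)]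
  refine (minpoly.eq_of_irreducible_of_monic ?_ ?_ (hmonic.map _)).symm
  · exact hmonic.irreducible_iff_irreducible_map_fraction_map.mp
      (irreducible_chebyshevC_two_pow Int.prime_two n)
  · rw [Polynomial.Chebyshev.map_C, Polynomial.Chebyshev.aeval_C, eval_chebyshevC_two_pow_c]

lemma natDegree_minpoly_c (n : ℕ) : (minpoly ℚ (c n)).natDegree = 2 ^ n := by
  rw [minpoly_c]
  exact_mod_cast (isMonicOfDegree_chebyshevC ℚ (n := 2 ^ n) (by positivity)).natDegree_eq

lemma linearIndependent_c_pow (n : ℕ) :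
    LinearIndependent ℚ fun i : Fin (2 ^ n) => c n ^ (i : ℕ) := by
  rw [← natDegree_minpoly_c n]
  exact linearIndependent_pow (c n)

lemma c_succ_sq_mem_one_add_span (k : ℕ) :
    c (k + 1) ^ 2 ∈ 1 + Submodule.span ℚ {c k} := by
  rw [c_succ_sq]
  exact Submodule.add_mem_sup (Submodule.mem_one.mpr ⟨2, by simp⟩)
    (Submodule.mem_span_singleton_self _)

lemma c_pow_mem_span_range_d (n i : ℕ) :
    c n ^ i ∈ Submodule.span ℚ
      (Set.range fun S : {S : Finset ℕ // S ⊆ Finset.Icc 1 n} => d S.1) :=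
  pow_mem_span_range_prod_subset (by simp [c_zero]) c_succ_sq_mem_one_add_span n i

/-- for `n ≥ 1`, the `2^n` numbers `d S`, `S ⊆ {1,…,n}`, are linearly
independent over `ℚ`, and their `ℚ`-span equals the `ℚ`-span of the powers
`θ^0, θ^1, …, θ^(2^n - 1)` where `θ = 2·cos(π/2^(n+1))`. -/
theorem stmt_1 (n : ℕ) (hn : 1 ≤ n) :
    LinearIndependent ℚ (fun S : {S : Finset ℕ // S ⊆ Finset.Icc 1 n} => d S.1) ∧
    Submodule.span ℚ (Set.range (fun S : {S : Finset ℕ // S ⊆ Finset.Icc 1 n} => d S.1)) =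
      Submodule.span ℚ (Set.range
        (fun i : Fin (2 ^ n) => (2 * Real.cos (π / 2 ^ (n + 1))) ^ (i : ℕ))) := by
  let _ : Fintype {S : Finset ℕ // S ⊆ Finset.Icc 1 n} :=
    Fintype.subtype (Finset.Icc 1 n).powerset fun _ => Finset.mem_powerset
  have hcard : Fintype.card {S : Finset ℕ // S ⊆ Finset.Icc 1 n} = 2 ^ n := by
    rw [Fintype.card_of_subtype (Finset.Icc 1 n).powerset fun _ => Finset.mem_powerset,
      Finset.card_powerset, Nat.card_Icc, Nat.add_sub_cancel]
  exact linearIndependent_and_span_eq_of_mem_span_of_card_le (linearIndependent_c_pow n)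
    (c_pow_mem_span_range_d n ·) (by rw [hcard, Fintype.card_fin])
end

section
/- Define a sequence of square integer matrices by B_0 = (0) (the 1×1 zero matrix) and, for n ≥ 0, B_{n+1} = [[0, 2·I + B_n],[I, 0]] in block form, where I is the identity matrix of size 2^n (so B_n has size 2^n). Then for every n ≥ 0, the matrix B_n, viewed over ℝ, has 2^n pairwise distinct real eigenvalues, namely 2·cos((2r+1)π/2^{n+1}) for r = 0, 1, …, 2^n − 1; equivalently, the characteristic polynomial of B_n equals ∏_{r=0}^{2^n−1} (X − 2·cos((2r+1)π/2^{n+1})). -/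
open Real Polynomial

/-- Identification of `Fin 2^n ⊕ Fin 2^n` with `Fin 2^(n+1)` giving block decompositions. -/
def pow2Equiv (n : ℕ) : Fin (2 ^ n) ⊕ Fin (2 ^ n) ≃ Fin (2 ^ (n + 1)) :=
  finSumFinEquiv.trans (finCongr (by rw [pow_succ, mul_two]))

/-- `B 0 = (0)`, and `B (n+1) = [[0, 2·I + B n],[I, 0]]` in block form. -/
def B : (n : ℕ) → Matrix (Fin (2 ^ n)) (Fin (2 ^ n)) ℤ
  | 0 => 0
  | n + 1 =>
      Matrix.reindex (pow2Equiv n) (pow2Equiv n)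
        (Matrix.fromBlocks 0 (2 • (1 : Matrix (Fin (2 ^ n)) (Fin (2 ^ n)) ℤ) + B n) 1 0)

/-! Clearing one block of the characteristic matrix by a block row operation shows that
`charpoly (B (n + 1))` is the composition of `charpoly (B n)` with `X ^ 2 - 2`. This is the rescaled
Chebyshev polynomial `C₂`, and `Cₖ ∘ Cₗ = Cₖₗ`, so `charpoly (B n) = C_{2ⁿ}`. Its roots are twice
those of the Chebyshev polynomial `T_{2ⁿ}`, because `Cₖ(2x) = 2 Tₖ(x)`. -/

section BlockAntidiagonal

open Matrix

variable {R m n : Type*} [CommRing R] [Fintype m] [DecidableEq m] [Fintype n] [DecidableEq n]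

theorem det_scalar_sub_map_C (A : Matrix m m R) (p : R[X]) :
    (scalar m p - A.map C).det = A.charpoly.comp p := by
  rw [charpoly, ← coe_compRingHom_apply, RingHom.map_det]
  congr 1
  ext i j : 1
  by_cases h : i = j <;> simp [h]

theorem X_pow_card_mul_charpoly_fromBlocks_zero₁₁_zero₂₂ (M : Matrix m n R) (N : Matrix n m R) :
    X ^ Fintype.card m * (fromBlocks 0 M N 0).charpoly =
      X ^ Fintype.card n * (M * N).charpoly.comp (X ^ 2) := by
  have helim : fromBlocks (scalar m (X : R[X])) (M.map C) 0 1 * charmatrix (fromBlocks 0 M N 0) =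
      fromBlocks (scalar m (X ^ 2 : R[X]) - (M * N).map C) 0 (-N.map C) (scalar n X) := by
    rw [charmatrix_fromBlocks, fromBlocks_multiply]
    congr 1
    · simp [Matrix.map_mul, sub_eq_add_neg, sq]
    · simp [← smul_eq_diagonal_mul, ← smul_eq_mul_diagonal]
    · simp
    · simp
  have hdet := congrArg det helim
  rw [det_mul, det_fromBlocks_zero₂₁, det_fromBlocks_zero₁₂, det_scalar_sub_map_C] at hdet
  simpa [charpoly, mul_comm] using hdet

theorem charpoly_fromBlocks_zero₁₁_zero₂₂ (M N : Matrix m m R) :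
    (fromBlocks 0 M N 0).charpoly = (M * N).charpoly.comp (X ^ 2) :=
  (monic_X_pow (Fintype.card m)).isRegular.left
    (X_pow_card_mul_charpoly_fromBlocks_zero₁₁_zero₂₂ M N)

end BlockAntidiagonal

theorem injOn_cos_odd_mul_pi_div (n : ℕ) :
    Set.InjOn (fun k : ℕ => cos ((2 * k + 1) * π / (2 * n))) (Finset.range n) :=
  (Finset.range n).nodup_map_iff_injOn.mp (Chebyshev.roots_T_real_nodup n)

theorem chebyshev_T_real_eq_prod (n : ℕ) :
    Chebyshev.T ℝ n = C (2 ^ (n - 1)) *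
      ∏ k ∈ Finset.range n, (X - C (cos ((2 * k + 1) * π / (2 * n)))) := by
  have hinj := injOn_cos_odd_mul_pi_div n
  have hcard : (Chebyshev.T ℝ n).roots.card = (Chebyshev.T ℝ n).natDegree := by
    rw [Chebyshev.roots_T_real, Finset.card_val, Finset.card_image_of_injOn hinj]
    simp
  have hprod := C_leadingCoeff_mul_prod_multiset_X_sub_C hcard
  rw [Chebyshev.leadingCoeff_T, Chebyshev.roots_T_real, Int.natAbs_natCast] at hprod
  rw [← hprod]
  congr 1
  exact Finset.prod_image (f := fun x => X - C x) hinj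

theorem chebyshev_C_real_eq_prod {n : ℕ} (hn : n ≠ 0) :
    Chebyshev.C ℝ n =
      ∏ k ∈ Finset.range n, (X - C (2 * cos ((2 * k + 1) * π / (2 * n)))) := by
  have hhalf (x : ℝ) : 2 * (C ⅟2 * X - C x) = X - C (2 * x) := by
    rw [mul_sub, ← mul_assoc, ← C_ofNat, ← C_mul, ← C_mul, mul_invOf_self, C_1, one_mul]
  calc Chebyshev.C ℝ n
      = 2 ^ n * ∏ k ∈ Finset.range n, (C ⅟2 * X - C (cos ((2 * k + 1) * π / (2 * n)))) := by
        rw [Chebyshev.C_eq_two_mul_T_comp_half_mul_X, chebyshev_T_real_eq_prod, mul_comp, prod_comp,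
          ← mul_assoc, ← mul_pow_sub_one hn]
        simp only [sub_comp, X_comp, pow_comp, ofNat_comp, C_comp, C_pow, C_ofNat, Nat.cast_ofNat]
    _ = ∏ k ∈ Finset.range n, 2 * (C ⅟2 * X - C (cos ((2 * k + 1) * π / (2 * n)))) := by
        rw [Finset.prod_mul_distrib, Finset.prod_const, Finset.card_range]
    _ = ∏ k ∈ Finset.range n, (X - C (2 * cos ((2 * k + 1) * π / (2 * n)))) := by
        simp only [hhalf]

theorem charpoly_B_succ (n : ℕ) : (B (n + 1)).charpoly = (B n).charpoly.comp (X ^ 2 - 2) := by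
  have hshift : 2 • (1 : Matrix (Fin (2 ^ n)) (Fin (2 ^ n)) ℤ) + B n =
      B n - Matrix.scalar _ (-2) := by
    ext i j
    by_cases h : i = j <;> simp [h, add_comm]
  rw [B, Matrix.charpoly_reindex, charpoly_fromBlocks_zero₁₁_zero₂₂, mul_one, hshift,
    Matrix.charpoly_sub_scalar, comp_assoc]
  simp [sub_eq_add_neg]

theorem charpoly_B_eq_chebyshev_C (n : ℕ) : (B n).charpoly = Chebyshev.C ℤ (2 ^ n) := by
  induction n with
  | zero => simp [B]
  | succ n ih => rw [charpoly_B_succ, ih, pow_succ (2 : ℤ), Chebyshev.C_mul, Chebyshev.C_two]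

theorem charpoly_map_intCast_B_eq_chebyshev_C (R : Type*) [CommRing R] (n : ℕ) :
    ((B n).map (Int.cast : ℤ → R)).charpoly = Chebyshev.C R (2 ^ n) := by
  rw [← Chebyshev.map_C (Int.castRingHom R), ← charpoly_B_eq_chebyshev_C]
  exact Matrix.charpoly_map (B n) (Int.castRingHom R)

/-- over `ℝ`, `B n` has the `2^n` pairwise distinct eigenvalues
`2·cos((2r+1)π/2^(n+1))`, `0 ≤ r < 2^n`; i.e. its characteristic polynomial is
`∏_{r=0}^{2^n−1} (X − 2·cos((2r+1)π/2^(n+1)))`. -/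
theorem stmt_6 (n : ℕ) :
    Function.Injective
      (fun r : Fin (2 ^ n) => 2 * Real.cos ((2 * (r : ℕ) + 1) * π / 2 ^ (n + 1))) ∧
    Matrix.charpoly ((B n).map (Int.cast : ℤ → ℝ)) =
      ∏ r ∈ Finset.range (2 ^ n),
        (Polynomial.X - Polynomial.C (2 * Real.cos ((2 * (r : ℝ) + 1) * π / 2 ^ (n + 1)))) := by
  have hden : (2 : ℝ) ^ (n + 1) = 2 * (2 ^ n : ℕ) := by
    rw [pow_succ', Nat.cast_pow, Nat.cast_ofNat]
  rw [hden]
  constructor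
  · intro r s h
    have hcos := mul_left_cancel₀ two_ne_zero h
    exact Fin.ext (injOn_cos_odd_mul_pi_div (2 ^ n) (by simp) (by simp) hcos)
  · rw [charpoly_map_intCast_B_eq_chebyshev_C, ← chebyshev_C_real_eq_prod (by positivity),
      Nat.cast_pow, Nat.cast_ofNat]
end

section
/- Define natural numbers d(m,n) for m, n ≥ 0 by: d(0,n) = 1 for all n ≥ 0; d(m,0) = 0 for m ≥ 1; and for m, n ≥ 1, d(m,n) = ∑_{s≥0} binomial(m−1, 2s) · 2^{m−1−2s} · d(s, n−1). Then for every n ≥ 0 and every real t > 1, the series ∑_{m≥0} d(m,n) · (t + t^{−1})^{−2m} converges, with sum equal to (t + t^{−1})·(t^{2^{n+1}−1} − t^{−(2^{n+1}−1)}) / (t^{2^{n+1}} − t^{−2^{n+1}}). -/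
open Real

/-- `d(0,n) = 1`, `d(m,0) = 0` for `m ≥ 1`, and for `m, n ≥ 1`
`d(m,n) = ∑_{s ≥ 0} C(m−1, 2s)·2^(m−1−2s)·d(s, n−1)` (all terms with `2s > m−1` vanish). -/
def dd : ℕ → ℕ → ℕ
  | 0, _ => 1
  | _ + 1, 0 => 0
  | m + 1, n + 1 =>
      ∑ s ∈ Finset.range (m + 1), Nat.choose m (2 * s) * 2 ^ (m - 2 * s) * dd s n
termination_by m n => n

/-!
Summing the recursion against `x ^ m` shows that the generating functions
`F n x = ∑ m, d(m,n) * x ^ m` satisfy `F (n+1) x = 1 + y * F n (y ^ 2)` with `y = x / (1 - 2 * x)`.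
In the coordinate `x = (t + t⁻¹)⁻²` one has `y = (t ^ 2 + t⁻²)⁻¹`, so the substitution `x ↦ y ^ 2`
is just `t ↦ t ^ 2`. The disc `‖x‖ ≤ 1 / 4`, that is `2 ≤ ‖t + t⁻¹‖`, is stable under it with
`1 / 4` a fixed point, so convergence for every `n` reduces to convergence at `1 / 4`.
-/

lemma hasSum_of_hasSum_swap {α β E : Type*} [AddCommMonoid E] [TopologicalSpace E]
    [ContinuousAdd E] [T3Space E] {f : α → β → E} {g : α → E} {h : β → E} {A : E}
    (hf : Summable (Function.uncurry f)) (hrow : ∀ i, HasSum (f i) (g i)) (hg : HasSum g A)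
    (hcol : ∀ j, HasSum (fun i ↦ f i j) (h j)) : HasSum h A := by
  have htotal : HasSum (Function.uncurry f) A :=
    (hf.hasSum.prod_fiberwise hrow).unique hg ▸ hf.hasSum
  exact ((Equiv.prodComm β α).hasSum_iff.mpr htotal).prod_fiberwise hcol

lemma norm_natCast_le_self {𝕜 : Type*} [NormedField 𝕜] (n : ℕ) : ‖(n : 𝕜)‖ ≤ n := by
  simpa only [norm_one, mul_one] using Nat.norm_cast_le (α := 𝕜) n

lemma ne_zero_of_two_le_norm {E : Type*} [NormedAddGroup E] {z : E} (hz : 2 ≤ ‖z‖) : z ≠ 0 :=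
  norm_pos_iff.mp (two_pos.trans_le hz)

section BinomialTransform

variable {𝕜 : Type*} [NormedField 𝕜]

lemma hasSum_choose_mul_pow_mul_pow (j : ℕ) {c x : 𝕜} (hx : ‖c‖ * ‖x‖ < 1) :
    HasSum (fun m : ℕ ↦ (m.choose j : 𝕜) * c ^ (m - j) * x ^ m)
      (x ^ j / (1 - c * x) ^ (j + 1)) := by
  have hinit : ∑ m ∈ Finset.range j, (m.choose j : 𝕜) * c ^ (m - j) * x ^ m = 0 :=
    Finset.sum_eq_zero fun m hm ↦ by
      simp [Nat.choose_eq_zero_of_lt (Finset.mem_range.mp hm)]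
  rw [← hasSum_nat_add_iff' j, hinit, sub_zero, div_eq_mul_one_div]
  refine ((hasSum_choose_mul_geometric_of_norm_lt_one j
    ((norm_mul c x).trans_lt hx)).mul_left (x ^ j)).congr_fun fun m ↦ ?_
  rw [Nat.add_sub_cancel, pow_add, mul_pow]
  ring

lemma summable_mul_choose_mul_pow_mul_pow [CompleteSpace 𝕜] (k : ℕ) {a : ℕ → 𝕜} {c x : 𝕜}
    (hx : ‖c‖ * ‖x‖ < 1)
    (ha : Summable fun s ↦ ‖a s‖ * (‖x‖ / (1 - ‖c‖ * ‖x‖)) ^ (k * s)) :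
    Summable (Function.uncurry fun s m : ℕ ↦
      a s * ((m.choose (k * s) : 𝕜) * c ^ (m - k * s) * x ^ m)) := by
  let g : ℕ × ℕ → ℝ := fun p ↦
    ‖a p.1‖ * ((p.2.choose (k * p.1) : ℝ) * ‖c‖ ^ (p.2 - k * p.1) * ‖x‖ ^ p.2)
  have hrow (s : ℕ) : HasSum (fun m ↦ g (s, m))
      (‖a s‖ * (‖x‖ / (1 - ‖c‖ * ‖x‖)) ^ (k * s) / (1 - ‖c‖ * ‖x‖)) := by
    have h := (hasSum_choose_mul_pow_mul_pow (k * s) (c := ‖c‖) (x := ‖x‖)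
      (by simpa only [norm_norm] using hx)).mul_left ‖a s‖
    rwa [pow_succ, ← div_div, ← div_pow, ← mul_div_assoc] at h
  have hg : Summable g := by
    refine (summable_prod_of_nonneg fun p ↦ ?_).mpr ⟨fun s ↦ (hrow s).summable, ?_⟩
    · positivity
    · simpa only [(hrow _).tsum_eq] using ha.div_const _
  refine hg.of_norm_bounded fun p ↦ ?_
  simp only [Function.uncurry, norm_mul, norm_pow, g]
  gcongr
  exact norm_natCast_le_self _

lemma hasSum_sum_choose_mul_pow_mul [CompleteSpace 𝕜] {k : ℕ} (hk : 0 < k) {a : ℕ → 𝕜}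
    {c x A : 𝕜} (hx : ‖c‖ * ‖x‖ < 1)
    (ha : Summable fun s ↦ ‖a s‖ * (‖x‖ / (1 - ‖c‖ * ‖x‖)) ^ (k * s))
    (hA : HasSum (fun s ↦ a s * (x / (1 - c * x)) ^ (k * s)) A) :
    HasSum (fun m : ℕ ↦ (∑ s ∈ Finset.range (m + 1),
      (m.choose (k * s) : 𝕜) * c ^ (m - k * s) * a s) * x ^ m) (A / (1 - c * x)) := by
  refine hasSum_of_hasSum_swap (summable_mul_choose_mul_pow_mul_pow k hx ha)
    (fun s ↦ (hasSum_choose_mul_pow_mul_pow (k * s) hx).mul_left (a s)) ?_ fun m ↦ ?_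
  · refine (hA.div_const (1 - c * x)).congr_fun fun s ↦ ?_
    rw [pow_succ, ← div_div, ← div_pow, ← mul_div_assoc]
  · have hrow : (∑ s ∈ Finset.range (m + 1),
          (m.choose (k * s) : 𝕜) * c ^ (m - k * s) * a s) * x ^ m =
        ∑ s ∈ Finset.range (m + 1),
          a s * ((m.choose (k * s) : 𝕜) * c ^ (m - k * s) * x ^ m) := by
      rw [Finset.sum_mul]
      exact Finset.sum_congr rfl fun s _ ↦ by ring
    rw [hrow]
    refine hasSum_sum_of_ne_finset_zero fun s hs ↦ ?_
    have hlt : m < k * s :=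
      (not_lt.mp (Finset.mem_range.not.mp hs)).trans (Nat.le_mul_of_pos_left s hk)
    simp [Nat.choose_eq_zero_of_lt hlt]

end BinomialTransform

section GeneratingFunction

variable {𝕜 : Type*} [NormedField 𝕜]

lemma hasSum_dd_zero (x : 𝕜) : HasSum (fun m ↦ (dd m 0 : 𝕜) * x ^ m) 1 := by
  convert hasSum_single (f := fun m ↦ (dd m 0 : 𝕜) * x ^ m) 0 ?_ using 1
  · simp [dd]
  · intro m hm
    obtain ⟨m, rfl⟩ := Nat.exists_eq_succ_of_ne_zero hm
    simp [dd]

lemma hasSum_dd_succ [CompleteSpace 𝕜] {n : ℕ} {x A : 𝕜} (hx : ‖(2 : 𝕜)‖ * ‖x‖ < 1)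
    (hsum : Summable fun s ↦ (dd s n : ℝ) * (‖x‖ / (1 - ‖(2 : 𝕜)‖ * ‖x‖)) ^ (2 * s))
    (hA : HasSum (fun s ↦ (dd s n : 𝕜) * (x / (1 - 2 * x)) ^ (2 * s)) A) :
    HasSum (fun m ↦ (dd m (n + 1) : 𝕜) * x ^ m) (1 + x / (1 - 2 * x) * A) := by
  have hnorm : Summable fun s ↦
      ‖(dd s n : 𝕜)‖ * (‖x‖ / (1 - ‖(2 : 𝕜)‖ * ‖x‖)) ^ (2 * s) := by
    have hpow (s : ℕ) : 0 ≤ (‖x‖ / (1 - ‖(2 : 𝕜)‖ * ‖x‖)) ^ (2 * s) :=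
      pow_nonneg (div_nonneg (norm_nonneg x) (sub_nonneg.mpr hx.le)) _
    exact hsum.of_nonneg_of_le (fun s ↦ mul_nonneg (norm_nonneg _) (hpow s))
      fun s ↦ mul_le_mul_of_nonneg_right (norm_natCast_le_self _) (hpow s)
  have htail := (hasSum_sum_choose_mul_pow_mul two_pos hx hnorm hA).mul_left x
  have hzero : (dd 0 (n + 1) : 𝕜) * x ^ 0 = 1 := by simp [dd]
  rw [← hasSum_nat_add_iff' 1, Finset.sum_range_one, hzero, add_sub_cancel_left,
    div_mul_eq_mul_div, mul_div_assoc]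
  refine htail.congr_fun fun m ↦ ?_
  rw [dd]
  push_cast
  ring

lemma summable_dd_mul_one_div_four_pow (n : ℕ) :
    Summable fun m ↦ (dd m n : ℝ) * (1 / 4) ^ m := by
  induction n with
  | zero => exact (hasSum_dd_zero _).summable
  | succ n ih =>
    have hfixed (s : ℕ) : ((1 / 4 : ℝ) / (1 - 2 * (1 / 4))) ^ (2 * s) = (1 / 4) ^ s := by
      rw [pow_mul]
      norm_num
    refine (hasSum_dd_succ (A := ∑' s, (dd s n : ℝ) * (1 / 4) ^ s) ?_ ?_ ?_).summable
    · norm_num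
    · simpa only [Real.norm_of_nonneg (show (0 : ℝ) ≤ 1 / 4 by norm_num), Real.norm_ofNat,
        hfixed] using ih
    · simpa only [hfixed] using ih.hasSum

lemma hasSum_dd_succ_of_norm_le [CompleteSpace 𝕜] {n : ℕ} {x A : 𝕜} (hx : ‖x‖ ≤ 1 / 4)
    (hA : HasSum (fun s ↦ (dd s n : 𝕜) * (x / (1 - 2 * x)) ^ (2 * s)) A) :
    HasSum (fun m ↦ (dd m (n + 1) : 𝕜) * x ^ m) (1 + x / (1 - 2 * x) * A) := by
  have htwo : ‖(2 : 𝕜)‖ ≤ 2 := mod_cast norm_natCast_le_self (𝕜 := 𝕜) 2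
  have hden : 1 / 2 ≤ 1 - ‖(2 : 𝕜)‖ * ‖x‖ := by nlinarith [norm_nonneg x]
  have hratio : ‖x‖ / (1 - ‖(2 : 𝕜)‖ * ‖x‖) ≤ 1 / 2 := by
    rw [div_le_iff₀ (by linarith)]
    linarith
  refine hasSum_dd_succ (by linarith) ?_ hA
  have hratio_nonneg : 0 ≤ ‖x‖ / (1 - ‖(2 : 𝕜)‖ * ‖x‖) :=
    div_nonneg (norm_nonneg x) (by linarith)
  refine (summable_dd_mul_one_div_four_pow n).of_nonneg_of_le (fun s ↦ by positivity) fun s ↦ ?_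
  rw [pow_mul]
  gcongr
  nlinarith

end GeneratingFunction

section SquaringMap

lemma sq_add_inv_sq {K : Type*} [Field K] {t : K} (ht : t ≠ 0) :
    t ^ 2 + (t ^ 2)⁻¹ = (t + t⁻¹) ^ 2 - 2 := by
  field_simp
  ring

lemma div_one_sub_two_mul_inv_sq {K : Type*} [Field K] {z : K} (hz : z ≠ 0) :
    z⁻¹ ^ 2 / (1 - 2 * z⁻¹ ^ 2) = (z ^ 2 - 2)⁻¹ := by
  have hden : 1 - 2 * z⁻¹ ^ 2 = (z ^ 2 - 2) * z⁻¹ ^ 2 := by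
    field_simp
  rw [hden, div_mul_cancel_right₀ (by positivity)]

lemma inv_sq_ne_sq {K : Type*} [Field K] {t : K} (hadd : t + t⁻¹ ≠ 0) (hinv : t⁻¹ ≠ t) :
    (t ^ 2)⁻¹ ≠ t ^ 2 := by
  rw [← inv_pow, Ne, sq_eq_sq_iff_eq_or_eq_neg, not_or]
  exact ⟨hinv, fun h ↦ hadd (by rw [h, add_neg_cancel])⟩

lemma two_le_add_inv {K : Type*} [Field K] [LinearOrder K] [IsStrictOrderedRing K] {t : K}
    (ht : 0 < t) : 2 ≤ t + t⁻¹ := by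
  have hsq : t + t⁻¹ - 2 = (t - 1) ^ 2 / t := by
    field_simp
    ring
  exact sub_nonneg.mp (hsq ▸ by positivity)

variable {𝕜 : Type*} [NormedField 𝕜] {t : 𝕜}

lemma ne_zero_of_two_le_norm_add_inv (ht : 2 ≤ ‖t + t⁻¹‖) : t ≠ 0 := by
  rintro rfl
  norm_num at ht

lemma two_le_norm_sq_add_inv_sq (ht : 2 ≤ ‖t + t⁻¹‖) : 2 ≤ ‖t ^ 2 + (t ^ 2)⁻¹‖ := by
  have htwo : ‖(2 : 𝕜)‖ ≤ 2 := mod_cast norm_natCast_le_self (𝕜 := 𝕜) 2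
  calc (2 : ℝ) ≤ ‖t + t⁻¹‖ ^ 2 - ‖(2 : 𝕜)‖ := by nlinarith
    _ = ‖(t + t⁻¹) ^ 2‖ - ‖(2 : 𝕜)‖ := by rw [norm_pow]
    _ ≤ ‖(t + t⁻¹) ^ 2 - 2‖ := norm_sub_norm_le _ _
    _ = ‖t ^ 2 + (t ^ 2)⁻¹‖ := by rw [sq_add_inv_sq (ne_zero_of_two_le_norm_add_inv ht)]

lemma inv_pow_two_pow_ne (n : ℕ) (ht : 2 ≤ ‖t + t⁻¹‖) (hinv : t⁻¹ ≠ t) :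
    t⁻¹ ^ 2 ^ n ≠ t ^ 2 ^ n := by
  induction n generalizing t with
  | zero => simpa only [pow_zero, pow_one] using hinv
  | succ n ih =>
    rw [pow_succ', pow_mul, pow_mul, inv_pow]
    exact ih (two_le_norm_sq_add_inv_sq ht) (inv_sq_ne_sq (ne_zero_of_two_le_norm ht) hinv)

end SquaringMap

section ChebyshevQuotient

variable {K : Type*} [Field K]

/-- The quotient `z U_{N-2}(z/2) / U_{N-1}(z/2)` of Chebyshev polynomials of the second kind at
`z = t + t⁻¹`, which for `N = 2 ^ (n + 1)` is the closed form of the generating function of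
`fun m ↦ dd m n`. It is meant for `1 ≤ N`, where `N - 1` is not truncated. -/
def chebyshevQuotient (N : ℕ) (t : K) : K :=
  (t + t⁻¹) * (t ^ (N - 1) - t⁻¹ ^ (N - 1)) / (t ^ N - t⁻¹ ^ N)

lemma chebyshevQuotient_one (t : K) : chebyshevQuotient 1 t = 0 := by
  simp [chebyshevQuotient]

lemma chebyshevQuotient_two_mul {N : ℕ} {t : K} (hadd : t ^ 2 + (t ^ 2)⁻¹ ≠ 0)
    (hden : t⁻¹ ^ (2 * N) ≠ t ^ (2 * N)) :
    chebyshevQuotient (2 * N) t = 1 + (t ^ 2 + (t ^ 2)⁻¹)⁻¹ * chebyshevQuotient N (t ^ 2) := by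
  have ht : t ≠ 0 := by
    rintro rfl
    simp at hden
  have hN : N ≠ 0 := by
    rintro rfl
    simp at hden
  obtain ⟨k, rfl⟩ := Nat.exists_eq_succ_of_ne_zero hN
  have hnum : (t + t⁻¹) * (t ^ (2 * k + 1) - t⁻¹ ^ (2 * k + 1)) =
      t ^ (2 * k + 2) - t⁻¹ ^ (2 * k + 2) + (t ^ (2 * k) - t⁻¹ ^ (2 * k)) := by
    linear_combination (t ^ (2 * k) - t⁻¹ ^ (2 * k)) * mul_inv_cancel₀ ht
  rw [chebyshevQuotient, chebyshevQuotient, mul_div_assoc (t ^ 2 + _), inv_mul_cancel_left₀ hadd,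
    ← inv_pow, ← pow_mul, ← pow_mul, ← pow_mul, ← pow_mul,
    one_add_div (sub_ne_zero.mpr hden.symm)]
  exact congrArg (· / _) hnum

lemma chebyshevQuotient_two_pow_succ {𝕜 : Type*} [NormedField 𝕜] (n : ℕ) {t : 𝕜}
    (ht : 2 ≤ ‖t + t⁻¹‖) (hinv : t⁻¹ ≠ t) :
    chebyshevQuotient (2 ^ (n + 1)) t =
      1 + (t ^ 2 + (t ^ 2)⁻¹)⁻¹ * chebyshevQuotient (2 ^ n) (t ^ 2) := by
  have hden := inv_pow_two_pow_ne (n + 1) ht hinv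
  rw [pow_succ'] at hden ⊢
  exact chebyshevQuotient_two_mul (ne_zero_of_two_le_norm (two_le_norm_sq_add_inv_sq ht)) hden

end ChebyshevQuotient

theorem stmt_7_general {𝕜 : Type*} [NormedField 𝕜] [CompleteSpace 𝕜] (n : ℕ) {t : 𝕜}
    (ht : 2 ≤ ‖t + t⁻¹‖) (hinv : t⁻¹ ≠ t) :
    HasSum (fun m : ℕ ↦ (dd m n : 𝕜) * ((t + t⁻¹)⁻¹) ^ (2 * m))
      ((t + t⁻¹) * (t ^ (2 ^ (n + 1) - 1) - t⁻¹ ^ (2 ^ (n + 1) - 1)) /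
        (t ^ (2 ^ (n + 1)) - t⁻¹ ^ (2 ^ (n + 1)))) := by
  change HasSum _ (chebyshevQuotient (2 ^ (n + 1)) t)
  induction n generalizing t with
  | zero =>
    simpa only [pow_mul, chebyshevQuotient_two_pow_succ 0 ht hinv, pow_zero,
      chebyshevQuotient_one, mul_zero, add_zero] using hasSum_dd_zero ((t + t⁻¹)⁻¹ ^ 2)
  | succ n ih =>
    have hadd := ne_zero_of_two_le_norm ht
    have hsubst : (t + t⁻¹)⁻¹ ^ 2 / (1 - 2 * (t + t⁻¹)⁻¹ ^ 2) = (t ^ 2 + (t ^ 2)⁻¹)⁻¹ := by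
      rw [div_one_sub_two_mul_inv_sq hadd, sq_add_inv_sq (ne_zero_of_two_le_norm_add_inv ht)]
    have hnorm : ‖(t + t⁻¹)⁻¹ ^ 2‖ ≤ 1 / 4 := by
      rw [norm_pow, norm_inv, inv_pow, ← one_div]
      exact one_div_le_one_div_of_le (by norm_num) (by nlinarith)
    have hprev := ih (two_le_norm_sq_add_inv_sq ht) (inv_sq_ne_sq hadd hinv)
    rw [← hsubst] at hprev
    simpa only [pow_mul _ 2, hsubst, chebyshevQuotient_two_pow_succ (n + 1) ht hinv] using
      hasSum_dd_succ_of_norm_le hnorm hprev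

/-- generating function of the invariants `d(m,n)`:
`∑_{m≥0} d(m,n)·(t+t⁻¹)^(−2m) = (t+t⁻¹)(t^(2^(n+1)−1) − t^(−(2^(n+1)−1)))/(t^(2^(n+1)) − t^(−2^(n+1)))`. -/
theorem stmt_7 (n : ℕ) (t : ℝ) (ht : 1 < t) :
    HasSum (fun m : ℕ => (dd m n : ℝ) * ((t + t⁻¹)⁻¹) ^ (2 * m))
      ((t + t⁻¹) * (t ^ (2 ^ (n + 1) - 1) - t⁻¹ ^ (2 ^ (n + 1) - 1)) /
        (t ^ (2 ^ (n + 1)) - t⁻¹ ^ (2 ^ (n + 1)))) :=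
  stmt_7_general n ((two_le_add_inv (one_pos.trans ht)).trans (Real.le_norm_self _))
    ((inv_lt_one_of_one_lt₀ ht).trans ht).ne
end

section
/- Let N ≥ 1 be an integer and let A be the adjacency matrix (with natural number entries) of the path graph on the vertex set {0, 1, …, N−1}, in which i and j are adjacent exactly when |i − j| = 1. Then for every real t > 1, the series ∑_{m≥0} (A^{2m})_{0,0} · (t + t^{−1})^{−2m} converges, with sum equal to (t + t^{−1})·(t^{N} − t^{−N}) / (t^{N+1} − t^{−(N+1)}). (Here (A^{2m})_{0,0} is the number of walks of length 2m in the path graph beginning and ending at the end vertex 0.) -/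
open Real

/-- Adjacency matrix of the path graph on `{0,…,N−1}`: `i` adjacent to `j` iff `|i−j| = 1`. -/
def pathAdj (N : ℕ) : Matrix (Fin N) (Fin N) ℕ :=
  Matrix.of fun i j => if (i : ℕ) + 1 = (j : ℕ) ∨ (j : ℕ) + 1 = (i : ℕ) then 1 else 0

/-!
Write `s = t + t⁻¹`. The column `v = (1 - s⁻¹A)⁻¹ e₀` of generating functions of walks ending at `0`
satisfies `s v = s e₀ + A v`. Extended by the boundary values `s` at `-1` and `0` at `N`, this is
the recurrence `s g(k + 1) = g(k) + g(k + 2)`, which `t ^ n - t⁻¹ ^ n` solves. The Neumann series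
converges because the row sums of `A` are at most `2 < |s|`, and its odd terms vanish because
the path is bipartite.
-/

section NeumannSeries

theorem hasSum_pow_smul_of_norm_lt_one {R E : Type*} [NormedRing R] [SeminormedAddCommGroup E]
    [Module R E] [IsBoundedSMul R E] {x : R} (hx : ‖x‖ < 1) {v w : E} (hv : v = w + x • v) :
    HasSum (fun m : ℕ => x ^ m • w) v := by
  have hsummable : Summable fun m : ℕ => ‖x ^ m • w‖ :=
    ((summable_norm_geometric_of_norm_lt_one hx).mul_right ‖w‖).of_nonneg_of_le
      (fun _ => norm_nonneg _) fun _ => norm_smul_le _ _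
  have hpartial (n : ℕ) : ∑ m ∈ Finset.range n, x ^ m • w = v - x ^ n • v := by
    have hterm (m : ℕ) : x ^ m • w = x ^ m • v - x ^ (m + 1) • v := by
      rw [pow_succ, mul_smul, ← smul_sub, ← eq_sub_of_add_eq hv.symm]
    simp only [hterm, Finset.sum_range_sub', pow_zero, one_smul]
  rw [hasSum_iff_tendsto_nat_of_summable_norm hsummable]
  simp only [hpartial]
  simpa using ((tendsto_pow_atTop_nhds_zero_of_norm_lt_one hx).smul_const v).const_sub v

open scoped Matrix Matrix.Norms.Operator

theorem hasSum_matrix_pow_apply_mul_inv_pow {n 𝕜 : Type*} [Fintype n] [DecidableEq n]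
    [NormedField 𝕜] {A : Matrix n n 𝕜} {s : 𝕜} (hA : ‖A‖ < ‖s‖) {i : n} {v : n → 𝕜}
    (hv : s • v = Pi.single i s + A *ᵥ v) (j : n) :
    HasSum (fun m : ℕ => (A ^ m) j i * s⁻¹ ^ m) (v j) := by
  have hs : 0 < ‖s‖ := (norm_nonneg A).trans_lt hA
  have hs0 : s ≠ 0 := norm_pos_iff.mp hs
  have hnorm : ‖s⁻¹ • A‖ < 1 := by
    rwa [norm_smul, norm_inv, inv_mul_lt_one₀ hs]
  have hfix : v = Pi.single i 1 + (s⁻¹ • A) • v := by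
    rw [Matrix.smul_eq_mulVec, Matrix.smul_mulVec, eq_comm, ← inv_smul_smul₀ hs0 (Pi.single i 1),
      ← smul_add, ← Pi.single_smul, smul_eq_mul, mul_one, ← hv, inv_smul_smul₀ hs0]
  have : IsBoundedSMul (Matrix n n 𝕜) (n → 𝕜) :=
    .of_norm_smul_le Matrix.linfty_opNorm_mulVec
  have hsum : HasSum (fun m : ℕ => (s⁻¹ • A) ^ m • Pi.single i 1) v :=
    hasSum_pow_smul_of_norm_lt_one hnorm hfix
  simpa [Matrix.smul_eq_mulVec, smul_pow, Matrix.smul_mulVec, mul_comm] using Pi.hasSum.mp hsum j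

end NeumannSeries

section PathAdj

/-- The vertex `j` carries the value `g (j + 1)`, so that `g 0` and `g (N + 1)` are the values at
the two missing neighbours of the end vertices. -/
theorem sum_pathAdj_mul_add_boundary {R : Type*} [NonAssocSemiring R] {N : ℕ} (j : Fin N)
    (g : ℕ → R) :
    ∑ k, (pathAdj N j k : R) * g (k + 1) + (if (j : ℕ) = 0 then g 0 else 0) +
      (if (j : ℕ) + 1 = N then g (N + 1) else 0) = g j + g (j + 2) := by
  have hj := j.isLt
  let f (k : ℕ) : R := if k = j ∨ k = j + 2 then g k else 0
  have hinner : ∑ k, (pathAdj N j k : R) * g (k + 1) = ∑ k ∈ Finset.range N, f (k + 1) := by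
    rw [← Fin.sum_univ_eq_sum_range (fun k => f (k + 1))]
    refine Finset.sum_congr rfl fun k _ => ?_
    simp only [pathAdj, Matrix.of_apply, f, Nat.cast_ite, Nat.cast_one, Nat.cast_zero, ite_mul,
      one_mul, zero_mul]
    grind
  have hleft : (if (j : ℕ) = 0 then g 0 else 0) = f 0 := by grind
  have hright : (if (j : ℕ) + 1 = N then g (N + 1) else 0) = f (N + 1) := by grind
  have hsplit (k : ℕ) : f k = (if k = j then g k else 0) + if k = j + 2 then g k else 0 := by
    grind
  rw [hinner, hleft, hright, ← Finset.sum_range_succ', ← Finset.sum_range_succ]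
  simp only [hsplit, Finset.sum_add_distrib, Finset.sum_ite_eq', Finset.mem_range]
  rw [if_pos (by omega), if_pos (by omega)]

theorem sum_pathAdj_le_two {N : ℕ} (j : Fin N) : ∑ k, pathAdj N j k ≤ 2 := by
  have h := sum_pathAdj_mul_add_boundary j fun _ => (1 : ℕ)
  simp only [mul_one, Nat.cast_id] at h
  omega

theorem pathAdj_pow_apply_eq_zero_of_odd {N m : ℕ} {i j : Fin N}
    (h : Odd (m + (i : ℕ) + (j : ℕ))) : (pathAdj N ^ m) i j = 0 := by
  induction m generalizing j with
  | zero =>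
    rw [pow_zero, Matrix.one_apply_ne]
    rintro rfl
    grind
  | succ m ih =>
    rw [pow_succ, Matrix.mul_apply]
    refine Finset.sum_eq_zero fun k _ => ?_
    by_cases hkj : (k : ℕ) + 1 = j ∨ (j : ℕ) + 1 = k
    · rw [ih (by grind), zero_mul]
    · simp [pathAdj, hkj]

open scoped Matrix Matrix.Norms.Operator

theorem norm_map_cast_pathAdj_le_two {R : Type*} [SeminormedRing R] [NormOneClass R] (N : ℕ) :
    ‖(pathAdj N).map (Nat.cast : ℕ → R)‖ ≤ 2 := by
  rw [Matrix.linfty_opNorm_def, ← NNReal.coe_two, NNReal.coe_le_coe]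
  refine Finset.sup_le fun j _ => ?_
  calc ∑ k, ‖(pathAdj N j k : R)‖₊ ≤ ∑ k, (pathAdj N j k : NNReal) := by
        gcongr with k
        simpa [← NNReal.coe_le_coe] using Nat.norm_cast_le (α := R) (pathAdj N j k)
    _ ≤ 2 := mod_cast sum_pathAdj_le_two j

theorem hasSum_pathAdj_pow_mul_inv_pow {𝕜 : Type*} [NormedField 𝕜] {N : ℕ} {s : 𝕜}
    (hs : 2 < ‖s‖) {g : ℕ → 𝕜} (hleft : g 0 = s) (hright : g (N + 1) = 0)
    (hrec : ∀ k < N, s * g (k + 1) = g k + g (k + 2)) {i : Fin N} (hi : (i : ℕ) = 0) (j : Fin N) :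
    HasSum (fun m : ℕ => ((pathAdj N ^ m) j i : 𝕜) * s⁻¹ ^ m) (g (j + 1)) := by
  let A := (pathAdj N).map (Nat.cast : ℕ → 𝕜)
  have hresolvent : s • (fun k : Fin N => g (k + 1)) =
      Pi.single i s + A *ᵥ fun k : Fin N => g (k + 1) := by
    ext k
    have hsum := sum_pathAdj_mul_add_boundary k g
    rw [hright, ite_self, add_zero, hleft, ← hrec k k.isLt] at hsum
    simp [A, Matrix.mulVec, dotProduct, Pi.single_apply, Fin.ext_iff, hi, ← hsum, add_comm]
  have hpow (m : ℕ) : (A ^ m) j i = ((pathAdj N ^ m) j i : 𝕜) :=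
    congrArg (fun M => M j i) ((Nat.castRingHom 𝕜).mapMatrix.map_pow (pathAdj N) m).symm
  simpa only [A, hpow] using hasSum_matrix_pow_apply_mul_inv_pow
    ((norm_map_cast_pathAdj_le_two N).trans_lt hs) hresolvent j

end PathAdj

theorem add_mul_pow_succ_sub_pow_succ_of_mul_eq_one {R : Type*} [CommRing R] {x y : R}
    (hxy : x * y = 1) (n : ℕ) :
    (x + y) * (x ^ (n + 1) - y ^ (n + 1)) = (x ^ (n + 2) - y ^ (n + 2)) + (x ^ n - y ^ n) := by
  linear_combination (x ^ n - y ^ n) * hxy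

theorem pow_sub_inv_pow_ne_zero_of_two_lt_norm {𝕜 : Type*} [NormedDivisionRing 𝕜] {t : 𝕜}
    (ht : 2 < ‖t + t⁻¹‖) {n : ℕ} (hn : n ≠ 0) : t ^ n - t⁻¹ ^ n ≠ 0 := by
  intro h
  have hnorm : ‖t‖ = ‖t‖⁻¹ := by
    rw [← norm_inv, ← pow_left_inj₀ (norm_nonneg _) (norm_nonneg _) hn, ← norm_pow, ← norm_pow,
      sub_eq_zero.mp h]
  have hle : ‖t‖ ≤ 1 := by
    by_contra! hlt
    exact (hlt.trans_eq hnorm).not_gt (inv_lt_one_of_one_lt₀ hlt)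
  have := norm_add_le t t⁻¹
  rw [norm_inv, ← hnorm] at this
  linarith

theorem two_lt_add_inv_of_one_lt {K : Type*} [Field K] [LinearOrder K] [IsStrictOrderedRing K]
    {t : K} (ht : 1 < t) : 2 < t + t⁻¹ := by
  have ht0 : 0 < t := zero_lt_one.trans ht
  have hsq : t + t⁻¹ - 2 = (t - 1) ^ 2 / t := by
    field_simp
    ring
  have : 0 < (t - 1) ^ 2 / t := div_pos (pow_pos (sub_pos.mpr ht) 2) ht0
  linarith

theorem hasSum_pathAdj_pow_mul_add_inv_pow {𝕜 : Type*} [NormedField 𝕜] {N : ℕ} {t : 𝕜}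
    (ht : 2 < ‖t + t⁻¹‖) {i : Fin N} (hi : (i : ℕ) = 0) (j : Fin N) :
    HasSum (fun m : ℕ => ((pathAdj N ^ m) j i : 𝕜) * (t + t⁻¹)⁻¹ ^ m)
      ((t + t⁻¹) * (t ^ (N - j : ℕ) - t⁻¹ ^ (N - j : ℕ)) / (t ^ (N + 1) - t⁻¹ ^ (N + 1))) := by
  have ht0 : t ≠ 0 := by
    rintro rfl
    norm_num at ht
  let W (n : ℕ) : 𝕜 := t ^ n - t⁻¹ ^ n
  have hW : W (N + 1) ≠ 0 := pow_sub_inv_pow_ne_zero_of_two_lt_norm ht N.succ_ne_zero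
  let g (k : ℕ) : 𝕜 := (t + t⁻¹) * W (N + 1 - k) / W (N + 1)
  have hleft : g 0 = t + t⁻¹ := by simp [g, hW]
  have hright : g (N + 1) = 0 := by simp [g, W]
  have hrec (k : ℕ) (hk : k < N) : (t + t⁻¹) * g (k + 1) = g k + g (k + 2) := by
    obtain ⟨n, rfl⟩ := Nat.exists_eq_add_of_lt hk
    have hWrec : (t + t⁻¹) * W (n + 1) = W (n + 2) + W n :=
      add_mul_pow_succ_sub_pow_succ_of_mul_eq_one (mul_inv_cancel₀ ht0) n
    simp only [g, show k + n + 1 + 1 - (k + 1) = n + 1 by omega,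
      show k + n + 1 + 1 - k = n + 2 by omega, show k + n + 1 + 1 - (k + 2) = n by omega]
    linear_combination (t + t⁻¹) / W (k + n + 1 + 1) * hWrec
  simpa only [g, W, Nat.add_sub_add_right] using
    hasSum_pathAdj_pow_mul_inv_pow ht hleft hright hrec hi j

theorem stmt_8_general {𝕜 : Type*} [NormedField 𝕜] (N : ℕ) (hN : 1 ≤ N) (t : 𝕜)
    (ht : 2 < ‖t + t⁻¹‖) :
    HasSum
      (fun m : ℕ => ((pathAdj N ^ (2 * m)) ⟨0, hN⟩ ⟨0, hN⟩ : 𝕜) * ((t + t⁻¹)⁻¹) ^ (2 * m))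
      ((t + t⁻¹) * (t ^ N - t⁻¹ ^ N) / (t ^ (N + 1) - t⁻¹ ^ (N + 1))) := by
  let i : Fin N := ⟨0, hN⟩
  have hinj : Function.Injective fun m : ℕ => 2 * m := mul_right_injective₀ two_ne_zero
  have hzero : ∀ m ∉ Set.range fun m : ℕ => 2 * m,
      ((pathAdj N ^ m) i i : 𝕜) * (t + t⁻¹)⁻¹ ^ m = 0 := by
    intro m hm
    have hodd : Odd m := Nat.not_even_iff_odd.mp fun h => hm ⟨m / 2, Nat.two_mul_div_two_of_even h⟩
    rw [pathAdj_pow_apply_eq_zero_of_odd (by simpa [i] using hodd), Nat.cast_zero, zero_mul]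
  exact (hinj.hasSum_iff hzero).mpr (hasSum_pathAdj_pow_mul_add_inv_pow ht rfl i)

/-- for `t > 1`,
`∑_{m≥0} (A^(2m))_{0,0}·(t+t⁻¹)^(−2m) = (t+t⁻¹)(t^N − t^(−N))/(t^(N+1) − t^(−(N+1)))`,
where `A` is the adjacency matrix of the path graph on `N ≥ 1` vertices. -/
theorem stmt_8 (N : ℕ) (hN : 1 ≤ N) (t : ℝ) (ht : 1 < t) :
    HasSum
      (fun m : ℕ =>
        (((pathAdj N ^ (2 * m)) ⟨0, hN⟩ ⟨0, hN⟩ : ℕ) : ℝ) * ((t + t⁻¹)⁻¹) ^ (2 * m))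
      ((t + t⁻¹) * (t ^ N - t⁻¹ ^ N) / (t ^ (N + 1) - t⁻¹ ^ (N + 1))) :=
  stmt_8_general N hN t ((two_lt_add_inv_of_one_lt ht).trans_le (le_norm_self _))
end

section
/- Let p be a prime, n ≥ 1 an integer, q = p^n, and let k be an algebraically closed field of characteristic p. Let F be the unique subfield of k with q elements. Let V = k², on which 2×2 matrices over k act by the standard action, and for a 2×2 matrix g over k let g^{⊗r} denote the induced k-linear endomorphism of the r-th tensor power V^{⊗r}. Let r, s be natural numbers with r < q and s < q, and let A : V^{⊗r} → V^{⊗s} be a k-linear map such that A ∘ g^{⊗r} = g^{⊗s} ∘ A for every g ∈ SL(2,k) all of whose entries lie in F. Then A ∘ g^{⊗r} = g^{⊗s} ∘ A for every g ∈ SL(2,k). -/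
open scoped TensorProduct

/-- The endomorphism `g^{⊗r}` of `V^{⊗r}` (with `V = k²`) induced by a `2×2` matrix `g`. -/
noncomputable def tensorPowerMap (k : Type*) [CommRing k] (r : ℕ)
    (g : Matrix (Fin 2) (Fin 2) k) :
    (⨂[k]^r (Fin 2 → k)) →ₗ[k] (⨂[k]^r (Fin 2 → k)) :=
  PiTensorProduct.map fun _ => Matrix.toLin' g

/-!
A transvection with parameter `t` is `1 + t • N`, and `(1 + t • N)^{⊗r}` is polynomial in `t` of
degree at most `r`. Hence the equation `A ∘ (1 + t • N)^{⊗r} = (1 + t • N)^{⊗s} ∘ A`, once it holds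
for more than `max r s` values of `t`, holds for all `t`. The `f` with `A ∘ f^{⊗r} = f^{⊗s} ∘ A` are
closed under composition, and over a field the transvections generate the special linear group.
-/

section Multilinear

variable {R ι : Type*} {M : ι → Type*} [CommSemiring R] [∀ i, AddCommMonoid (M i)]
  [∀ i, Module R (M i)] [Fintype ι] [DecidableEq ι]

theorem multilinearMap_map_add_smul_univ {N : Type*} [AddCommMonoid N] [Module R N]
    (f : MultilinearMap R M N) (x y : ∀ i, M i) (t : R) :
    f (x + t • y) = ∑ S : Finset ι, t ^ S.card • f (S.piecewise y x) := by
  rw [add_comm, f.map_add_univ]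
  refine Finset.sum_congr rfl fun S _ => ?_
  have smul_piecewise : S.piecewise (t • y) x =
      S.piecewise (fun i => t • S.piecewise y x i) (S.piecewise y x) := by
    ext i
    by_cases hi : i ∈ S <;> simp [hi]
  rw [smul_piecewise, f.map_piecewise_smul (fun _ => t), Finset.prod_const]

theorem piTensorProduct_map_add_smul {N : ι → Type*} [∀ i, AddCommMonoid (N i)]
    [∀ i, Module R (N i)] (f g : ∀ i, M i →ₗ[R] N i) (t : R) :
    PiTensorProduct.map (f + t • g) =
      ∑ S : Finset ι, t ^ S.card • PiTensorProduct.map (S.piecewise g f) :=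
  multilinearMap_map_add_smul_univ (PiTensorProduct.mapMultilinear R M N) f g t

end Multilinear

section Polynomial

open Polynomial

variable {R : Type*} [CommRing R] [IsDomain R]

theorem polynomial_eq_zero_of_natDegree_lt_encard_of_eval_eq_zero {P : R[X]} {T : Set R}
    (hP : P.natDegree < T.encard) (hT : ∀ t ∈ T, P.eval t = 0) : P = 0 := by
  classical
  by_contra hP₀
  refine hP.not_ge ?_
  calc T.encard
    _ ≤ (P.roots.toFinset : Set R).encard :=
      Set.encard_le_encard fun t ht => by simpa [hP₀] using hT t ht
    _ = P.roots.toFinset.card := Set.encard_coe_eq_coe_finsetCard _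
    _ ≤ P.natDegree := by exact_mod_cast P.roots.toFinset_card_le.trans P.card_roots'

theorem sum_pow_smul_eq_of_forall_mem_eq {M κ μ : Type*} [AddCommGroup M] [Module R M]
    [Module.Projective R M] [Fintype κ] [Fintype μ]
    {n : ℕ} {d : κ → ℕ} {e : μ → ℕ} {v : κ → M} {w : μ → M} {T : Set R}
    (hd : ∀ i, d i ≤ n) (he : ∀ j, e j ≤ n) (hn : n < T.encard)
    (hT : ∀ t ∈ T, ∑ i, t ^ d i • v i = ∑ j, t ^ e j • w j) (t : R) :
    ∑ i, t ^ d i • v i = ∑ j, t ^ e j • w j := by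
  rw [← sub_eq_zero, ← Module.forall_dual_apply_eq_zero_iff R]
  intro φ
  let P : R[X] := ∑ i, C (φ (v i)) * X ^ d i - ∑ j, C (φ (w j)) * X ^ e j
  have eval_P (u : R) : P.eval u = φ (∑ i, u ^ d i • v i - ∑ j, u ^ e j • w j) := by
    simp only [P, eval_sub, eval_finsetSum, eval_C_mul, eval_pow, eval_X, map_sub, map_sum,
      map_smul, smul_eq_mul, mul_comm (u ^ _)]
  have natDegree_P : P.natDegree ≤ n := by
    rw [← max_self n]
    exact natDegree_sub_le_of_le
      (natDegree_sum_le_of_forall_le _ _ fun i _ => (natDegree_C_mul_X_pow_le _ _).trans (hd i))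
      (natDegree_sum_le_of_forall_le _ _ fun j _ => (natDegree_C_mul_X_pow_le _ _).trans (he j))
  have P_eq_zero : P = 0 :=
    polynomial_eq_zero_of_natDegree_lt_encard_of_eval_eq_zero
      ((Nat.cast_le.mpr natDegree_P).trans_lt hn)
      fun u hu => by rw [eval_P, hT u hu, sub_self, map_zero]
  rw [← eval_P, P_eq_zero, eval_zero]

end Polynomial

section Commutant

/-- The linear endomorphisms `f` with `A ∘ f^{⊗r} = f^{⊗s} ∘ A`, as a submonoid of `End V`. A
representation on `V` makes `A` equivariant exactly when it takes its values in this submonoid. -/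
def tensorPowerCommutant {R V : Type*} [CommSemiring R] [AddCommMonoid V] [Module R V] {r s : ℕ}
    (A : (⨂[R]^r V) →ₗ[R] (⨂[R]^s V)) : Submonoid (Module.End R V) where
  carrier := {f | A ∘ₗ PiTensorProduct.map (fun _ => f) = PiTensorProduct.map (fun _ => f) ∘ₗ A}
  one_mem' := by simp [Module.End.one_eq_id]
  mul_mem' {f g} hf hg := by
    rw [Set.mem_ofPred_eq] at hf hg ⊢
    simp only [Module.End.mul_eq_comp, PiTensorProduct.map_comp]
    rw [← LinearMap.comp_assoc, hf, LinearMap.comp_assoc, hg, LinearMap.comp_assoc]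

theorem mem_tensorPowerCommutant {R V : Type*} [CommSemiring R] [AddCommMonoid V] [Module R V]
    {r s : ℕ} {A : (⨂[R]^r V) →ₗ[R] (⨂[R]^s V)} {f : Module.End R V} :
    f ∈ tensorPowerCommutant A ↔
      A ∘ₗ PiTensorProduct.map (fun _ => f) = PiTensorProduct.map (fun _ => f) ∘ₗ A :=
  Iff.rfl

theorem add_smul_mem_tensorPowerCommutant {k V : Type*} [Field k] [AddCommGroup V] [Module k V]
    {r s : ℕ} {A : (⨂[k]^r V) →ₗ[k] (⨂[k]^s V)} {f g : Module.End k V} {T : Set k}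
    (hr : r < T.encard) (hs : s < T.encard)
    (hT : ∀ t ∈ T, f + t • g ∈ tensorPowerCommutant A) (t : k) :
    f + t • g ∈ tensorPowerCommutant A := by
  have expand {m : ℕ} (u : k) :
      PiTensorProduct.map (fun _ : Fin m => f + u • g) = ∑ S : Finset (Fin m),
        u ^ S.card • PiTensorProduct.map (S.piecewise (fun _ => g) fun _ => f) :=
    piTensorProduct_map_add_smul (fun _ => f) (fun _ => g) u
  have mem_iff (u : k) : f + u • g ∈ tensorPowerCommutant A ↔
      ∑ S : Finset (Fin r), u ^ S.card •
          A ∘ₗ PiTensorProduct.map (S.piecewise (fun _ => g) fun _ => f) =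
        ∑ S : Finset (Fin s), u ^ S.card •
          PiTensorProduct.map (S.piecewise (fun _ => g) fun _ => f) ∘ₗ A := by
    rw [mem_tensorPowerCommutant, expand, expand]
    simp only [LinearMap.ext_iff, LinearMap.comp_apply, LinearMap.sum_apply,
      LinearMap.smul_apply, map_sum, map_smul]
  rw [mem_iff]
  exact sum_pow_smul_eq_of_forall_mem_eq (n := max r s)
    (fun S => (card_finset_fin_le S).trans (le_max_left r s))
    (fun S => (card_finset_fin_le S).trans (le_max_right r s))
    (by rcases max_choice r s with h | h <;> rwa [h]) (fun u hu => (mem_iff u).mp (hT u hu)) t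

end Commutant

section SpecialLinearGroup

open Matrix Matrix.SpecialLinearGroup

variable {ι : Type*} [Fintype ι] [DecidableEq ι]

theorem toLin'_transvection {R : Type*} [CommRing R] {i j : ι} (hij : i ≠ j) (c : R) :
    toLin' (transvection hij c : Matrix ι ι R) = 1 + c • toLin' (single i j (1 : R)) := by
  rw [transvection_coe, map_add, toLin'_one, ← map_smul, smul_single, smul_eq_mul, mul_one,
    Module.End.one_eq_id]

theorem specialLinearGroup_map_transvection {R S : Type*} [CommRing R] [CommRing S] (f : R →+* S)
    {i j : ι} (hij : i ≠ j) (c : R) :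
    (transvection hij c).map f = transvection hij (f c) :=
  Subtype.ext <| by simp [transvection_coe, Matrix.map_add]

variable {k : Type*} [Field k]

-- This is `w c * w (-1)` for the Weyl elements `w c = e_ij(c) e_ji(-c⁻¹) e_ij(c)`.
theorem diag2n_eq_prod_transvection {i j : ι} (hij : i ≠ j) {c : k} (hc : c ≠ 0) :
    diag2n hij c hc =
      transvection hij c * transvection hij.symm (-c⁻¹) * transvection hij c *
        (transvection hij (-1) * transvection hij.symm 1 * transvection hij (-1)) := by
  ext a b
  simp only [diag2n_coe, diagonal_apply, coe_mul, transvection_coe, mul_add, mul_one, add_mul,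
    one_mul, single_mul_single_same, single_mul_single_of_ne, mul_neg, neg_mul, neg_neg, ne_eq, hij,
    hij.symm, hc, not_false_eq_true, mul_inv_cancel₀, inv_mul_cancel₀, add_zero, Matrix.add_apply,
    one_apply, single_apply]
  grind

theorem submonoid_eq_top_of_transvection_mem {S : Submonoid (SpecialLinearGroup ι k)}
    (hS : ∀ (i j : ι) (hij : i ≠ j) (c : k), transvection hij c ∈ S) : S = ⊤ := by
  rw [Submonoid.eq_top_iff']
  intro g
  rcases subsingleton_or_nontrivial ι with _ | _
  · exact Subsingleton.elim 1 g ▸ S.one_mem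
  · refine diagonal_transvection_induction' (· ∈ S) g (fun i j hij c hc => ?_) hS
      fun _ _ => S.mul_mem
    rw [diag2n_eq_prod_transvection]
    apply_rules [S.mul_mem, hS]

theorem stmt_11_general {R : Type*} [CommRing R] [Algebra R k] [FaithfulSMul R k]
    {r s : ℕ} (hr : r < ENat.card R) (hs : s < ENat.card R)
    {A : (⨂[k]^r (ι → k)) →ₗ[k] (⨂[k]^s (ι → k))}
    (hA : ∀ g : SpecialLinearGroup ι R,
      toLin' (g.map (algebraMap R k) : Matrix ι ι k) ∈ tensorPowerCommutant A)
    (g : SpecialLinearGroup ι k) : toLin' (g : Matrix ι ι k) ∈ tensorPowerCommutant A := by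
  let S : Submonoid (SpecialLinearGroup ι k) := (tensorPowerCommutant A).comap
    ((toLinAlgEquiv' : Matrix ι ι k ≃ₐ[k] _).toMonoidHom.comp coeMonoidHom)
  suffices hS : S = ⊤ from (hS ▸ Submonoid.mem_top g : g ∈ S)
  refine submonoid_eq_top_of_transvection_mem fun i j hij c => ?_
  change toLin' (transvection hij c : Matrix ι ι k) ∈ tensorPowerCommutant A
  have card_le : ENat.card R ≤ (Set.range (algebraMap R k)).encard :=
    (FaithfulSMul.algebraMap_injective R k).encard_range
  rw [toLin'_transvection]
  refine add_smul_mem_tensorPowerCommutant (hr.trans_le card_le) (hs.trans_le card_le) ?_ c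
  rintro _ ⟨b, rfl⟩
  rw [← toLin'_transvection hij, ← specialLinearGroup_map_transvection]
  exact hA _

end SpecialLinearGroup

/-- if `r, s < q = p^n` and a `k`-linear map `A : V^{⊗r} → V^{⊗s}` commutes
with `g^{⊗•}` for every `g ∈ SL(2, F_q)`, then it commutes with `g^{⊗•}` for every
`g ∈ SL(2, k)`. -/
theorem stmt_11 (p : ℕ) (hp : p.Prime) (n : ℕ) (hn : 1 ≤ n) (q : ℕ) (hq : q = p ^ n)
    (k : Type*) [Field k] [IsAlgClosed k] [CharP k p]
    (F : Subfield k) (hF : Nat.card F = q)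
    (r s : ℕ) (hr : r < q) (hs : s < q)
    (A : (⨂[k]^r (Fin 2 → k)) →ₗ[k] (⨂[k]^s (Fin 2 → k)))
    (hA : ∀ g : Matrix.SpecialLinearGroup (Fin 2) k,
      (∀ i j, (g : Matrix (Fin 2) (Fin 2) k) i j ∈ F) →
        A ∘ₗ tensorPowerMap k r g = tensorPowerMap k s g ∘ₗ A) :
    ∀ g : Matrix.SpecialLinearGroup (Fin 2) k,
      A ∘ₗ tensorPowerMap k r g = tensorPowerMap k s g ∘ₗ A := by
  have card_pos : 0 < Nat.card F := by omega
  have : Finite F := Nat.finite_of_card_ne_zero card_pos.ne'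
  have card_F : ENat.card F = q := by rw [ENat.card_eq_coe_natCard, hF]
  exact stmt_11_general (R := F) (by rw [card_F]; exact_mod_cast hr)
    (by rw [card_F]; exact_mod_cast hs) fun g => hA (g.map (algebraMap F k)) fun i j => (g i j).2
end

section
/- Define square integer matrices C_m as follows: C_0 = (1) and C_1 = (2) (both 1×1); for n ≥ 1, C_{2n} is the block diagonal matrix diag(C_{2n−1}, C_{2n−3}, …, C_3, C_1, C_0); and for n ≥ 1, C_{2n+1} = [[2·C_{2n−1}, C_{2n−1}], [C_{2n−1}, 2·C_{2n−2}]] in block form. Then for every n ≥ 0 the matrix C_{2n+1} is symmetric, and every entry of C_{2n+1} is either zero or a power of 2. -/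
/-- `CC n = (C_{2n}, C_{2n+1})`, where `C_0 = (1)`, `C_1 = (2)`,
`C_{2n} = diag(C_{2n−1}, C_{2n−3}, …, C_1, C_0) = diag(C_{2n−1}, C_{2n−2})` and
`C_{2n+1} = [[2·C_{2n−1}, C_{2n−1}],[C_{2n−1}, 2·C_{2n−2}]]` (both of size `2^n`). -/
def CC : (n : ℕ) → Matrix (Fin (2 ^ n)) (Fin (2 ^ n)) ℤ × Matrix (Fin (2 ^ n)) (Fin (2 ^ n)) ℤ
  | 0 => (1, 2)
  | n + 1 =>
      (Matrix.reindex (pow2Equiv n) (pow2Equiv n)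
        (Matrix.fromBlocks (CC n).2 0 0 (CC n).1),
       Matrix.reindex (pow2Equiv n) (pow2Equiv n)
        (Matrix.fromBlocks (2 • (CC n).2) (CC n).2 (CC n).2 (2 • (CC n).1)))

section MatrixEntries

variable {l m n o α R : Type*} {S : Set α}

theorem fromBlocks_mem_matrix_iff {A : Matrix m l α} {B : Matrix m o α}
    {C : Matrix n l α} {D : Matrix n o α} :
    Matrix.fromBlocks A B C D ∈ S.matrix ↔
      (A ∈ S.matrix ∧ B ∈ S.matrix) ∧ (C ∈ S.matrix ∧ D ∈ S.matrix) := by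
  simp only [Set.mem_matrix, Sum.forall, Matrix.fromBlocks_apply₁₁, Matrix.fromBlocks_apply₁₂,
    Matrix.fromBlocks_apply₂₁, Matrix.fromBlocks_apply₂₂, forall_and]
  exact and_and_and_comm

theorem smul_mem_matrix [SMul R α] {k : R} (hS : ∀ a ∈ S, k • a ∈ S) {M : Matrix m n α}
    (hM : M ∈ S.matrix) : k • M ∈ S.matrix :=
  fun i j => hS _ (hM i j)

theorem zero_mem_matrix [Zero α] (h0 : 0 ∈ S) : (0 : Matrix m n α) ∈ S.matrix :=
  fun _ _ => h0

theorem reindex_mem_matrix (e : m ≃ l) (f : n ≃ o) {M : Matrix m n α} (hM : M ∈ S.matrix) :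
    Matrix.reindex e f M ∈ S.matrix :=
  fun _ _ => hM _ _

end MatrixEntries

theorem mul_mem_insert_zero_powers {M : Type*} [MonoidWithZero M] {a b : M}
    (hb : b ∈ insert 0 (Submonoid.powers a : Set M)) :
    a * b ∈ insert 0 (Submonoid.powers a : Set M) := by
  obtain rfl | hb := hb
  · exact Or.inl (mul_zero a)
  · exact Or.inr (mul_mem (Submonoid.mem_powers a) hb)

theorem CC_isSymm (n : ℕ) : (CC n).1.IsSymm ∧ (CC n).2.IsSymm := by
  induction n with
  | zero => exact ⟨Matrix.isSymm_one, Matrix.transpose_ofNat 2⟩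
  | succ n ih =>
    obtain ⟨h_even, h_odd⟩ := ih
    exact ⟨(h_odd.fromBlocks Matrix.transpose_zero h_even).reindex _,
      ((h_odd.smul 2).fromBlocks h_odd (h_even.smul 2)).reindex _⟩

theorem CC_mem_matrix {S : Set ℤ} (h0 : 0 ∈ S) (h1 : 1 ∈ S) (h2 : ∀ a ∈ S, 2 • a ∈ S) (n : ℕ) :
    (CC n).1 ∈ S.matrix ∧ (CC n).2 ∈ S.matrix := by
  induction n with
  | zero =>
    exact ⟨(Matrix.diagonal_mem_matrix_iff h0).2 fun _ => h1,
      (Matrix.diagonal_mem_matrix_iff h0).2 fun _ => h2 1 h1⟩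
  | succ n ih =>
    obtain ⟨h_even, h_odd⟩ := ih
    have h_diag : Matrix.fromBlocks (CC n).2 0 0 (CC n).1 ∈ S.matrix :=
      fromBlocks_mem_matrix_iff.2
        ⟨⟨h_odd, zero_mem_matrix h0⟩, ⟨zero_mem_matrix h0, h_even⟩⟩
    have h_full :
        Matrix.fromBlocks (2 • (CC n).2) (CC n).2 (CC n).2 (2 • (CC n).1) ∈ S.matrix :=
      fromBlocks_mem_matrix_iff.2
        ⟨⟨smul_mem_matrix h2 h_odd, h_odd⟩, ⟨h_odd, smul_mem_matrix h2 h_even⟩⟩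
    exact ⟨reindex_mem_matrix _ _ h_diag, reindex_mem_matrix _ _ h_full⟩

/-- each Cartan matrix `C_{2n+1}` is symmetric, and all of its entries are
zero or powers of `2`. -/
theorem stmt_13 (n : ℕ) :
    ((CC n).2).IsSymm ∧
    ∀ i j : Fin (2 ^ n), (CC n).2 i j = 0 ∨ ∃ e : ℕ, (CC n).2 i j = 2 ^ e := by
  have h_entries : (CC n).2 ∈ (insert 0 (Submonoid.powers (2 : ℤ) : Set ℤ)).matrix := by
    refine (CC_mem_matrix (Set.mem_insert 0 _) (Or.inr (one_mem _)) (fun a ha => ?_) n).2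
    rw [nsmul_eq_mul]
    exact mul_mem_insert_zero_powers ha
  exact ⟨(CC_isSymm n).2,
    fun i j => (h_entries i j).imp_right fun ⟨e, he⟩ => ⟨e, he.symm⟩⟩
end

section
/- For every integer n ≥ 0, the minimal polynomial over ℚ of the real number 2·cos(π/2^{n+1}) has degree 2^n, and its set of real roots is exactly {2·cos((2r+1)π/2^{n+1}) : r = 0, 1, …, 2^n − 1}; moreover these 2^n numbers are pairwise distinct. -/
open Real Polynomial

/-!
The rescaled Chebyshev polynomial `C_m`, characterised by `C_m(2 cos θ) = 2 cos (m θ)`, is monic of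
degree `m` and has the `m` distinct real roots `2 cos ((2r + 1)π / (2m))`. For `m = 2 ^ n` with
`n ≥ 1` it is Eisenstein at `2`: in characteristic `p` we have `C_p = X ^ p`, which the composition
law `C_{mk} = C_m ∘ C_k` extends to powers of `p`, and `C_{2j}(0) = C_j(-2) = ± 2`. So `C_{2 ^ n}`
is the minimal polynomial of each of its roots.
-/

section CommRing

variable (R : Type*) [CommRing R]

lemma isMonicOfDegree_chebyshevC_s14 [Nontrivial R] {m : ℤ} (hm : m ≠ 0) :
    IsMonicOfDegree (Chebyshev.C R m) m.natAbs := by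
  induction m using Chebyshev.induct' with
  | zero => contradiction
  | one => simpa using isMonicOfDegree_X R
  | add_two k ih₁ ih₀ =>
    have hlead : IsMonicOfDegree (X * Chebyshev.C R (k + 1)) (k + 2) := by
      convert (isMonicOfDegree_X R).mul (ih₁ (by lia)) using 1
      lia
    have hlower : (Chebyshev.C R k).natDegree < k + 2 := by
      rcases eq_or_ne (k : ℤ) 0 with hk | hk
      · simp [hk]
      · rw [(ih₀ hk).natDegree_eq]
        lia
    rw [Chebyshev.C_add_two]
    exact hlead.sub hlower
  | neg k ih => simpa using ih (neg_ne_zero.mp hm)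

lemma chebyshevC_pow_eq_X_pow (p : ℕ) [Fact p.Prime] [CharP R p] (k : ℕ) :
    Chebyshev.C R (p ^ k) = X ^ p ^ k := by
  induction k with
  | zero => simp
  | succ k ih =>
    rw [pow_succ, Chebyshev.C_mul, ih, ← dickson_one_one_eq_chebyshev_C, dickson_one_one_charP,
      X_pow_comp, ← pow_mul, pow_succ']

lemma eval_zero_chebyshevC_two_mul (m : ℤ) :
    (Chebyshev.C R (2 * m)).eval 0 = 2 * m.negOnePow := by
  simp [mul_comm 2 m, Chebyshev.C_mul, Chebyshev.C_two]

end CommRing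

lemma prime_dvd_coeff_chebyshevC_pow (p : ℕ) [Fact p.Prime] {k i : ℕ} (hi : i ≠ p ^ k) :
    (p : ℤ) ∣ (Chebyshev.C ℤ (p ^ k)).coeff i := by
  have hcoeff := congrArg (coeff · i) (chebyshevC_pow_eq_X_pow (ZMod p) p k)
  rw [← Chebyshev.map_C (Int.castRingHom (ZMod p))] at hcoeff
  simp only [coeff_map, coeff_X_pow, if_neg hi, eq_intCast] at hcoeff
  exact (ZMod.intCast_zmod_eq_zero_iff_dvd _ p).mp hcoeff

lemma isEisensteinAt_chebyshevC_two_pow_succ (k : ℕ) :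
    (Chebyshev.C ℤ (2 ^ (k + 1))).IsEisensteinAt (Ideal.span {2}) := by
  obtain ⟨hdegree, hmonic⟩ := isMonicOfDegree_chebyshevC_s14 ℤ (m := 2 ^ (k + 1)) (by positivity)
  refine hmonic.isEisensteinAt_of_mem_of_notMem
    (Ideal.IsPrime.ne_top <| (Ideal.span_singleton_prime two_ne_zero).mpr Int.prime_two)
    (fun {i} hi ↦ ?_) ?_
  · have hi' : i ≠ 2 ^ (k + 1) := by
      simpa [hdegree, Int.natAbs_pow] using hi.ne
    exact Ideal.mem_span_singleton.mpr (prime_dvd_coeff_chebyshevC_pow 2 hi')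
  · have hcoeff : (Chebyshev.C ℤ (2 ^ (k + 1))).coeff 0 = 2 * Int.negOnePow (2 ^ k) := by
      rw [coeff_zero_eq_eval_zero, pow_succ', eval_zero_chebyshevC_two_mul, Int.cast_id]
    rw [hcoeff, Ideal.span_singleton_pow, Ideal.mem_span_singleton]
    rcases Int.units_eq_one_or (Int.negOnePow (2 ^ k)) with h | h <;> rw [h] <;> decide

lemma irreducible_chebyshevC_two_pow_s14 (k : ℕ) : Irreducible (Chebyshev.C ℤ (2 ^ k)) := by
  cases k with
  | zero => simpa using irreducible_X
  | succ k =>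
    obtain ⟨hdegree, hmonic⟩ := isMonicOfDegree_chebyshevC_s14 ℤ (m := 2 ^ (k + 1)) (by positivity)
    refine (isEisensteinAt_chebyshevC_two_pow_succ k).irreducible
      ((Ideal.span_singleton_prime two_ne_zero).mpr Int.prime_two) hmonic.isPrimitive ?_
    rw [hdegree]
    positivity

lemma minpoly_eq_chebyshevC_two_pow {A : Type*} [Ring A] [IsDomain A] [Algebra ℚ A] {k : ℕ} {x : A}
    (hx : aeval x (Chebyshev.C ℚ (2 ^ k)) = 0) : minpoly ℚ x = Chebyshev.C ℚ (2 ^ k) := by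
  have hmonic (R : Type) [CommRing R] [Nontrivial R] : (Chebyshev.C R (2 ^ k)).Monic :=
    (isMonicOfDegree_chebyshevC_s14 R (by positivity)).monic
  have hirr : Irreducible (Chebyshev.C ℚ (2 ^ k)) := by
    simpa using ((hmonic ℤ).irreducible_iff_irreducible_map_fraction_map (K := ℚ)).mp
      (irreducible_chebyshevC_two_pow_s14 k)
  exact (minpoly.eq_of_irreducible_of_monic hirr hx (hmonic ℚ)).symm

lemma eval_chebyshevC_real_eq_zero_iff (m : ℕ) (x : ℝ) :
    (Chebyshev.C ℝ m).eval x = 0 ↔ ∃ r < m, x = 2 * cos ((2 * r + 1) * π / (2 * m)) := by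
  have hscale : (Chebyshev.C ℝ m).eval x = 2 * (Chebyshev.T ℝ m).eval (x / 2) := by
    simpa [eval_comp, mul_div_cancel₀] using
      congrArg (eval (x / 2)) (Chebyshev.C_comp_two_mul_X ℝ m)
  have hroots : (Chebyshev.T ℝ m).eval (x / 2) = 0 ↔
      ∃ r < m, cos ((2 * r + 1) * π / (2 * m)) = x / 2 := by
    rw [← IsRoot.def, ← mem_roots (Chebyshev.T_ne_zero ℝ m), Chebyshev.roots_T_real]
    simp
  rw [hscale, mul_eq_zero_iff_left two_ne_zero, hroots]
  simp only [eq_div_iff (two_ne_zero' ℝ), eq_comm (a := x), mul_comm]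

lemma injective_two_mul_cos_odd_mul_pi_div (m : ℕ) :
    Function.Injective fun r : Fin m ↦ 2 * cos ((2 * (r : ℕ) + 1) * π / (2 * m)) := by
  have hinj : Set.InjOn (fun r : ℕ ↦ cos ((2 * r + 1) * π / (2 * m))) (Finset.range m) :=
    (Finset.range m).nodup_map_iff_injOn.mp (Chebyshev.roots_T_real_nodup m)
  exact fun r s hrs ↦ Fin.ext <| hinj (by simp) (by simp) (mul_left_cancel₀ two_ne_zero hrs)

/-- the minimal polynomial of `2·cos(π/2^(n+1))` over `ℚ` has degree `2^n`,
its real roots are exactly the `2^n` numbers `2·cos((2r+1)π/2^(n+1))`, `0 ≤ r < 2^n`,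
and these numbers are pairwise distinct. -/
theorem stmt_14 (n : ℕ) :
    (minpoly ℚ (2 * Real.cos (π / 2 ^ (n + 1)))).natDegree = 2 ^ n ∧
    (∀ x : ℝ, (Polynomial.aeval x) (minpoly ℚ (2 * Real.cos (π / 2 ^ (n + 1)))) = 0 ↔
      ∃ r : ℕ, r < 2 ^ n ∧ x = 2 * Real.cos ((2 * (r : ℝ) + 1) * π / 2 ^ (n + 1))) ∧
    Function.Injective
      (fun r : Fin (2 ^ n) => 2 * Real.cos ((2 * (r : ℕ) + 1) * π / 2 ^ (n + 1))) := by
  have hroots (x : ℝ) : aeval x (Chebyshev.C ℚ (2 ^ n)) = 0 ↔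
      ∃ r : ℕ, r < 2 ^ n ∧ x = 2 * cos ((2 * (r : ℝ) + 1) * π / 2 ^ (n + 1)) := by
    simpa [pow_succ'] using eval_chebyshevC_real_eq_zero_iff (2 ^ n) x
  have hminpoly : minpoly ℚ (2 * cos (π / 2 ^ (n + 1))) = Chebyshev.C ℚ (2 ^ n) :=
    minpoly_eq_chebyshevC_two_pow <| (hroots _).mpr ⟨0, by positivity, by simp⟩
  rw [hminpoly]
  refine ⟨?_, hroots, ?_⟩
  · simpa [Int.natAbs_pow] using
      (isMonicOfDegree_chebyshevC_s14 ℚ (m := 2 ^ n) (by positivity)).natDegree_eq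
  · simpa [pow_succ'] using injective_two_mul_cos_odd_mul_pi_div (2 ^ n)
end
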